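/- Let p̄ = (p(1), p(2), …) satisfy 0 ≤ p(i) < 1 and ∏_{i=1}^∞ (1 − p(i))^i > 0. Then for every first-order sentence ψ of the language L_≤ the limit lim_{n→∞} Prob(n,p̄;ψ) exists. -/

import Mathlib

open FirstOrder Filter

namespace RandomGraph

/-- The set of potential edges of a graph on `Fin n` (pairs `(v,w)` with `v < w`).
Vertex `v : Fin n` represents the number `v + 1` of the interval `[n] = {1, …, n}`. -/
abbrev EdgeIdx (n : ℕ) := {e : Fin n × Fin n // e.1 < e.2}

/-- An outcome of the random graph on `[n]`: a choice of which potential edges are present. -/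
abbrev Sample (n : ℕ) := EdgeIdx n → Bool

/-- Adjacency of two vertices (described by their values in `Fin n`) in the outcome `ω`. -/
def adjVal {n : ℕ} (ω : Sample n) (a b : ℕ) : Prop :=
  ∃ e : EdgeIdx n, ω e = true ∧
    ((e.1.1.val = a ∧ e.1.2.val = b) ∨ (e.1.1.val = b ∧ e.1.2.val = a))

/-- Adjacency of two vertices in the outcome `ω`. -/
def sampleAdj {n : ℕ} (ω : Sample n) (v w : Fin n) : Prop := adjVal ω v.val w.val

/-- The probability of the outcome `ω` in the model `G(n, p̄)`: each pair of distinct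
vertices at distance `d` is an edge with probability `p d`, independently.  (The value `p 0` is
never used, since distinct vertices are at distance at least 1.) -/
noncomputable def sampleWeight (p : ℕ → ℝ) {n : ℕ} (ω : Sample n) : ℝ :=
  ∏ e : EdgeIdx n,
    (if ω e then p (e.1.2.val - e.1.1.val) else 1 - p (e.1.2.val - e.1.1.val))

/-- The probability of the outcome `ω` in the circular model `C(n, p̄)`: vertices `v, w` are
adjacent with probability `p (min |v-w| (n - |v-w|))`, independently. -/
noncomputable def cWeight (p : ℕ → ℝ) {n : ℕ} (ω : Sample n) : ℝ :=
  ∏ e : EdgeIdx n,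
    (if ω e then p (min (e.1.2.val - e.1.1.val) (n - (e.1.2.val - e.1.1.val)))
      else 1 - p (min (e.1.2.val - e.1.1.val) (n - (e.1.2.val - e.1.1.val))))

open scoped Classical in
/-- The probability of the event `P` in the random graph `G(n, p̄)`. -/
noncomputable def Pr (p : ℕ → ℝ) (n : ℕ) (P : Sample n → Prop) : ℝ :=
  ∑ ω : Sample n, if P ω then sampleWeight p ω else 0

open scoped Classical in
/-- The probability of the event `P` in the circular random graph `C(n, p̄)`. -/
noncomputable def cPr (p : ℕ → ℝ) (n : ℕ) (P : Sample n → Prop) : ℝ :=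
  ∑ ω : Sample n, if P ω then cWeight p ω else 0

/-! ### The language `L` of graphs (also used as the language `L^c`) -/

/-- An outcome `ω` of the random graph, viewed as a structure of `FirstOrder.Language.graph`,
the language with a single binary adjacency predicate. -/
def graphStructure {n : ℕ} (ω : Sample n) : Language.graph.Structure (Fin n) where
  RelMap | .adj => fun x => sampleAdj ω (x 0) (x 1)

/-- Satisfaction of a sentence of the language `L` in the outcome `ω`. -/
def SatL {n : ℕ} (ω : Sample n) (ψ : Language.graph.Sentence) : Prop :=
  @Language.Sentence.Realize _ _ (graphStructure ω) ψ

/-- `Prob(n, p̄; ψ)` for a sentence `ψ` of the language `L`. -/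
noncomputable def ProbL (p : ℕ → ℝ) (n : ℕ) (ψ : Language.graph.Sentence) : ℝ :=
  Pr p n fun ω => SatL ω ψ

/-- The probability that `C(n, p̄)` satisfies a sentence `ψ` of the language `L^c = L`. -/
noncomputable def cProbL (p : ℕ → ℝ) (n : ℕ) (ψ : Language.graph.Sentence) : ℝ :=
  cPr p n fun ω => SatL ω ψ

/-! ### The language `L₊` -/

/-- The constants of the language `L₊`: the first element `1` and the last element `n`. -/
inductive plusFunc : ℕ → Type
  | one : plusFunc 0
  | last : plusFunc 0

/-- The relations of `L₊`: adjacency and successor. -/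
inductive plusRel : ℕ → Type
  | adj : plusRel 2
  | succ : plusRel 2

/-- The language `L₊` with adjacency, successor (`x = y + 1`), and constants `1` and `n`. -/
def Lplus : Language := ⟨plusFunc, plusRel⟩

/-- An outcome `ω` of the random graph on `[m+1]`, as an `L₊`-structure. -/
def plusStructure {m : ℕ} (ω : Sample (m + 1)) : Lplus.Structure (Fin (m + 1)) where
  funMap | .one => fun _ => 0 | .last => fun _ => Fin.last m
  RelMap
    | .adj => fun x => sampleAdj ω (x 0) (x 1)
    | .succ => fun x => (x 0).val = (x 1).val + 1

/-- `Prob(n, p̄; ψ)` for a sentence `ψ` of `L₊` (set to `0` in the irrelevant case `n = 0`,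
where the constants cannot be interpreted). -/
noncomputable def ProbPlus (p : ℕ → ℝ) : ℕ → Lplus.Sentence → ℝ
  | 0, _ => 0
  | (m + 1), ψ => Pr p (m + 1) fun ω => @Language.Sentence.Realize _ _ (plusStructure ω) ψ

/-! ### The language `L≤` -/

/-- The relations of `L≤`: adjacency and linear order. -/
inductive leRel : ℕ → Type
  | adj : leRel 2
  | le : leRel 2

/-- The language `L≤` with adjacency and a linear order. -/
def Lle : Language := ⟨fun _ => Empty, leRel⟩

/-- An outcome `ω` of the random graph on `[n]`, as an `L≤`-structure. -/
def leStructure {n : ℕ} (ω : Sample n) : Lle.Structure (Fin n) where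
  funMap := fun f _ => Empty.elim f
  RelMap
    | .adj => fun x => sampleAdj ω (x 0) (x 1)
    | .le => fun x => x 0 ≤ x 1

/-- Satisfaction of a sentence of `L≤` in the outcome `ω`. -/
def SatLe {n : ℕ} (ω : Sample n) (ψ : Lle.Sentence) : Prop :=
  @Language.Sentence.Realize _ _ (leStructure ω) ψ

/-- `Prob(n, p̄; ψ)` for a sentence `ψ` of `L≤`. -/
noncomputable def ProbLe (p : ℕ → ℝ) (n : ℕ) (ψ : Lle.Sentence) : ℝ :=
  Pr p n fun ω => SatLe ω ψ

/-! ### The circular languages `L₊^c` and `L≤^c` -/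

/-- The relations of `L₊^c`: adjacency and cyclic successor. -/
inductive plusCRel : ℕ → Type
  | adj : plusCRel 2
  | succ : plusCRel 2

/-- The language `L₊^c`, with adjacency and cyclic successor (`x = y + 1 (mod n)`). -/
def LplusC : Language := ⟨fun _ => Empty, plusCRel⟩

/-- An outcome `ω` of the circular random graph on `[n]`, as an `L₊^c`-structure. -/
def plusCStructure {n : ℕ} (ω : Sample n) : LplusC.Structure (Fin n) where
  funMap := fun f _ => Empty.elim f
  RelMap
    | .adj => fun x => sampleAdj ω (x 0) (x 1)
    | .succ => fun x => (x 0).val = ((x 1).val + 1) % n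

/-- The probability that `C(n, p̄)` satisfies a sentence `ψ` of the language `L₊^c`. -/
noncomputable def cProbPlus (p : ℕ → ℝ) (n : ℕ) (ψ : LplusC.Sentence) : ℝ :=
  cPr p n fun ω => @Language.Sentence.Realize _ _ (plusCStructure ω) ψ

/-- The relations of `L≤^c`: adjacency and the ternary clockwise-order predicate. -/
inductive cycRel : ℕ → Type
  | adj : cycRel 2
  | btw : cycRel 3

/-- The language `L≤^c`, with adjacency and the ternary clockwise-order predicate `C`. -/
def Lcyc : Language := ⟨fun _ => Empty, cycRel⟩

/-- `C(a, b, c)`: `a ≤ b ≤ c` holds after some cyclic permutation of `(a, b, c)`. -/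
def cyclicBtw {n : ℕ} (a b c : Fin n) : Prop :=
  (a ≤ b ∧ b ≤ c) ∨ (b ≤ c ∧ c ≤ a) ∨ (c ≤ a ∧ a ≤ b)

/-- An outcome `ω` of the circular random graph on `[n]`, as an `L≤^c`-structure. -/
def cycStructure {n : ℕ} (ω : Sample n) : Lcyc.Structure (Fin n) where
  funMap := fun f _ => Empty.elim f
  RelMap
    | .adj => fun x => sampleAdj ω (x 0) (x 1)
    | .btw => fun x => cyclicBtw (x 0) (x 1) (x 2)

/-- Satisfaction of a sentence of `L≤^c` in the outcome `ω`. -/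
def SatCyc {n : ℕ} (ω : Sample n) (ψ : Lcyc.Sentence) : Prop :=
  @Language.Sentence.Realize _ _ (cycStructure ω) ψ

/-- The probability that `C(n, p̄)` satisfies a sentence `ψ` of the language `L≤^c`. -/
noncomputable def cProbCyc (p : ℕ → ℝ) (n : ℕ) (ψ : Lcyc.Sentence) : ℝ :=
  cPr p n fun ω => SatCyc ω ψ


/-! ### Ordered graphs, back-and-forth games -/

structure OG where
  α : Type
  le : α → α → Prop
  adj : α → α → Prop

def OG.str (A : OG) : Lle.Structure A.α where
  funMap := fun f _ => Empty.elim f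
  RelMap
    | .adj => fun x => A.adj (x 0) (x 1)
    | .le => fun x => A.le (x 0) (x 1)

def OG.Sat (A : OG) (ψ : Lle.Sentence) : Prop :=
  @Language.Sentence.Realize _ _ A.str ψ

def AtomPres (A B : OG) (l : Set (A.α × B.α)) : Prop :=
  ∀ x ∈ l, ∀ y ∈ l, (x.1 = y.1 ↔ x.2 = y.2) ∧ (A.le x.1 y.1 ↔ B.le x.2 y.2) ∧
    (A.adj x.1 y.1 ↔ B.adj x.2 y.2)

def EF : ℕ → (A B : OG) → Set (A.α × B.α) → Prop
  | 0, A, B, l => AtomPres A B l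
  | k + 1, A, B, l => (∀ a, ∃ b, EF k A B (insert (a, b) l)) ∧
      (∀ b, ∃ a, EF k A B (insert (a, b) l)) ∧ AtomPres A B l

theorem AtomPres.mono {A B : OG} {l l' : Set (A.α × B.α)} (h : AtomPres A B l) (hl : l' ⊆ l) :
    AtomPres A B l' := fun x hx y hy => h x (hl hx) y (hl hy)

theorem EF.atom {k : ℕ} {A B : OG} {l : Set (A.α × B.α)} (h : EF k A B l) : AtomPres A B l := by
  cases k with
  | zero => exact h
  | succ k => exact h.2.2

theorem EF.mono {k : ℕ} {A B : OG} {l l' : Set (A.α × B.α)} (h : EF k A B l) (hl : l' ⊆ l) :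
    EF k A B l' := by
  induction k generalizing l l' with
  | zero => exact AtomPres.mono h hl
  | succ k ih =>
    refine ⟨fun a => ?_, fun b => ?_, h.2.2.mono hl⟩
    · obtain ⟨b, hb⟩ := h.1 a
      exact ⟨b, ih hb (Set.insert_subset_insert hl)⟩
    · obtain ⟨a, hb⟩ := h.2.1 b
      exact ⟨a, ih hb (Set.insert_subset_insert hl)⟩

theorem EF.pred {k : ℕ} {A B : OG} {l : Set (A.α × B.α)} (h : EF (k + 1) A B l) :
    EF k A B l := by
  induction k generalizing l with
  | zero => exact h.2.2
  | succ k ih =>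
    refine ⟨fun a => ?_, fun b => ?_, h.2.2⟩
    · obtain ⟨b, hb⟩ := h.1 a
      exact ⟨b, ih hb⟩
    · obtain ⟨a, hb⟩ := h.2.1 b
      exact ⟨a, ih hb⟩

theorem EF.le {k m : ℕ} (hkm : k ≤ m) {A B : OG} {l : Set (A.α × B.α)} (h : EF m A B l) :
    EF k A B l := by
  induction m, hkm using Nat.le_induction with
  | base => exact h
  | succ m _ ih => exact ih h.pred

theorem EF.symm {k : ℕ} {A B : OG} {l : Set (A.α × B.α)} (h : EF k A B l) :
    EF k B A {x | (x.2, x.1) ∈ l} := by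
  induction k generalizing l with
  | zero =>
    intro x hx y hy
    have := h _ hx _ hy
    exact ⟨this.1.symm, this.2.1.symm, this.2.2.symm⟩
  | succ k ih =>
    refine ⟨fun b => ?_, fun a => ?_, ?_⟩
    · obtain ⟨a, ha⟩ := h.2.1 b
      refine ⟨a, (ih ha).mono ?_⟩
      rintro ⟨x, y⟩ hx
      simp only [Set.mem_insert_iff, Set.mem_ofPred_eq, Prod.mk.injEq] at hx ⊢
      tauto
    · obtain ⟨b, ha⟩ := h.1 a
      refine ⟨b, (ih ha).mono ?_⟩
      rintro ⟨x, y⟩ hx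
      simp only [Set.mem_insert_iff, Set.mem_ofPred_eq, Prod.mk.injEq] at hx ⊢
      tauto
    · intro x hx y hy
      have := h.2.2 _ hx _ hy
      exact ⟨this.1.symm, this.2.1.symm, this.2.2.symm⟩

theorem EF.trans {k : ℕ} {A B C : OG} {l : Set (A.α × B.α)} {l' : Set (B.α × C.α)}
    (h : EF k A B l) (h' : EF k B C l') :
    EF k A C {x | ∃ b, (x.1, b) ∈ l ∧ (b, x.2) ∈ l'} := by
  have key : ∀ {l : Set (A.α × B.α)} {l' : Set (B.α × C.α)}, AtomPres A B l → AtomPres B C l' →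
      AtomPres A C {x | ∃ b, (x.1, b) ∈ l ∧ (b, x.2) ∈ l'} := by
    rintro l l' h h' x ⟨b, hb, hb'⟩ y ⟨c, hc, hc'⟩
    have h1 := h _ hb _ hc
    have h2 := h' _ hb' _ hc'
    exact ⟨h1.1.trans h2.1, h1.2.1.trans h2.2.1, h1.2.2.trans h2.2.2⟩
  induction k generalizing l l' with
  | zero => exact key h h'
  | succ k ih =>
    refine ⟨fun a => ?_, fun c => ?_, key h.2.2 h'.2.2⟩
    · obtain ⟨b, hb⟩ := h.1 a
      obtain ⟨c, hc⟩ := h'.1 b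
      refine ⟨c, (ih hb hc).mono ?_⟩
      rintro ⟨x, y⟩ hx
      rcases hx with hx | ⟨d, hd, hd'⟩
      · obtain ⟨rfl, rfl⟩ := Prod.mk.inj hx
        exact ⟨b, Or.inl rfl, Or.inl rfl⟩
      · exact ⟨d, Or.inr hd, Or.inr hd'⟩
    · obtain ⟨b, hb⟩ := h'.2.1 c
      obtain ⟨a, hc⟩ := h.2.1 b
      refine ⟨a, (ih hc hb).mono ?_⟩
      rintro ⟨x, y⟩ hx
      rcases hx with hx | ⟨d, hd, hd'⟩
      · obtain ⟨rfl, rfl⟩ := Prod.mk.inj hx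
        exact ⟨b, Or.inl rfl, Or.inl rfl⟩
      · exact ⟨d, Or.inr hd, Or.inr hd'⟩

/-- Isomorphisms of ordered graphs. -/
structure OGIso (A B : OG) extends A.α ≃ B.α where
  le_iff : ∀ x y, A.le x y ↔ B.le (toEquiv x) (toEquiv y)
  adj_iff : ∀ x y, A.adj x y ↔ B.adj (toEquiv x) (toEquiv y)

theorem OGIso.ef {A B : OG} (f : OGIso A B) (k : ℕ) : EF k A B {x | x.2 = f.toEquiv x.1} := by
  have key : AtomPres A B {x | x.2 = f.toEquiv x.1} := by
    rintro ⟨x, x'⟩ hx ⟨y, y'⟩ hy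
    simp only [Set.mem_ofPred_eq] at hx hy
    subst hx hy
    exact ⟨f.toEquiv.injective.eq_iff.symm, f.le_iff _ _, f.adj_iff _ _⟩
  induction k with
  | zero => exact key
  | succ k ih =>
    refine ⟨fun a => ⟨f.toEquiv a, ih.mono ?_⟩, fun b => ⟨f.toEquiv.symm b, ih.mono ?_⟩, key⟩
    · rintro ⟨x, y⟩ (hx | hx)
      · obtain ⟨rfl, rfl⟩ := Prod.mk.inj hx
        rfl
      · exact hx
    · rintro ⟨x, y⟩ (hx | hx)
      · obtain ⟨rfl, rfl⟩ := Prod.mk.inj hx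
        simp
      · exact hx

def OGIso.refl (A : OG) : OGIso A A := ⟨Equiv.refl _, fun _ _ => Iff.rfl, fun _ _ => Iff.rfl⟩

def OGIso.symm {A B : OG} (f : OGIso A B) : OGIso B A :=
  ⟨f.toEquiv.symm, fun x y => by rw [f.le_iff]; simp, fun x y => by rw [f.adj_iff]; simp⟩

def OGIso.trans {A B C : OG} (f : OGIso A B) (g : OGIso B C) : OGIso A C :=
  ⟨f.toEquiv.trans g.toEquiv, fun x y => by rw [f.le_iff, g.le_iff]; simp,
    fun x y => by rw [f.adj_iff, g.adj_iff]; simp⟩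

/-- Ordered sum. -/
def OG.sum (A B : OG) : OG where
  α := A.α ⊕ B.α
  le x y := match x, y with
    | .inl a, .inl a' => A.le a a'
    | .inl _, .inr _ => True
    | .inr _, .inl _ => False
    | .inr b, .inr b' => B.le b b'
  adj x y := match x, y with
    | .inl a, .inl a' => A.adj a a'
    | .inl _, .inr _ => False
    | .inr _, .inl _ => False
    | .inr b, .inr b' => B.adj b b'

def OG.emp : OG := ⟨Empty, fun _ _ => True, fun _ _ => True⟩

def sumRel {A B A' B' : OG} (l : Set (A.α × B.α)) (l' : Set (A'.α × B'.α)) :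
    Set ((A.sum A').α × (B.sum B').α) :=
  {x | (∃ y ∈ l, x = (Sum.inl y.1, Sum.inl y.2)) ∨ (∃ y ∈ l', x = (Sum.inr y.1, Sum.inr y.2))}

theorem EF.sum {k : ℕ} {A B A' B' : OG} {l : Set (A.α × B.α)} {l' : Set (A'.α × B'.α)}
    (h : EF k A B l) (h' : EF k A' B' l') : EF k (A.sum A') (B.sum B') (sumRel l l') := by
  have key : ∀ {l : Set (A.α × B.α)} {l' : Set (A'.α × B'.α)}, AtomPres A B l → AtomPres A' B' l' →
      AtomPres (A.sum A') (B.sum B') (sumRel l l') := by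
    rintro l l' h h' x (⟨x, hx, rfl⟩ | ⟨x, hx, rfl⟩) y (⟨y, hy, rfl⟩ | ⟨y, hy, rfl⟩)
    · have := h _ hx _ hy
      simpa [OG.sum] using this
    · simp [OG.sum]
    · simp [OG.sum]
    · have := h' _ hx _ hy
      simpa [OG.sum] using this
  induction k generalizing l l' with
  | zero => exact key h h'
  | succ k ih =>
    refine ⟨?_, ?_, key h.2.2 h'.2.2⟩
    · rintro (a | a)
      · obtain ⟨b, hb⟩ := h.1 a
        refine ⟨Sum.inl b, (ih hb h'.pred).mono ?_⟩
        rintro x (rfl | ⟨y, hy, rfl⟩ | ⟨y, hy, rfl⟩)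
        · exact Or.inl ⟨_, Or.inl rfl, rfl⟩
        · exact Or.inl ⟨_, Or.inr hy, rfl⟩
        · exact Or.inr ⟨_, hy, rfl⟩
      · obtain ⟨b, hb⟩ := h'.1 a
        refine ⟨Sum.inr b, (ih h.pred hb).mono ?_⟩
        rintro x (rfl | ⟨y, hy, rfl⟩ | ⟨y, hy, rfl⟩)
        · exact Or.inr ⟨_, Or.inl rfl, rfl⟩
        · exact Or.inl ⟨_, hy, rfl⟩
        · exact Or.inr ⟨_, Or.inr hy, rfl⟩
    · rintro (a | a)
      · obtain ⟨b, hb⟩ := h.2.1 a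
        refine ⟨Sum.inl b, (ih hb h'.pred).mono ?_⟩
        rintro x (rfl | ⟨y, hy, rfl⟩ | ⟨y, hy, rfl⟩)
        · exact Or.inl ⟨_, Or.inl rfl, rfl⟩
        · exact Or.inl ⟨_, Or.inr hy, rfl⟩
        · exact Or.inr ⟨_, hy, rfl⟩
      · obtain ⟨b, hb⟩ := h'.2.1 a
        refine ⟨Sum.inr b, (ih h.pred hb).mono ?_⟩
        rintro x (rfl | ⟨y, hy, rfl⟩ | ⟨y, hy, rfl⟩)
        · exact Or.inr ⟨_, Or.inl rfl, rfl⟩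
        · exact Or.inl ⟨_, hy, rfl⟩
        · exact Or.inr ⟨_, Or.inr hy, rfl⟩

def OGIso.sumCongr {A B A' B' : OG} (f : OGIso A B) (g : OGIso A' B') :
    OGIso (A.sum A') (B.sum B') :=
  ⟨Equiv.sumCongr f.toEquiv g.toEquiv, by
    rintro (x | x) (y | y)
    · exact f.le_iff x y
    · exact Iff.rfl
    · exact Iff.rfl
    · exact g.le_iff x y, by
    rintro (x | x) (y | y)
    · exact f.adj_iff x y
    · exact Iff.rfl
    · exact Iff.rfl
    · exact g.adj_iff x y⟩

def OGIso.assoc (A B C : OG) : OGIso ((A.sum B).sum C) (A.sum (B.sum C)) :=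
  ⟨Equiv.sumAssoc _ _ _, by
    rintro ((x | x) | x) ((y | y) | y) <;> exact Iff.rfl, by
    rintro ((x | x) | x) ((y | y) | y) <;> exact Iff.rfl⟩

def OGIso.empSum (A : OG) : OGIso (OG.emp.sum A) A :=
  ⟨Equiv.emptySum Empty _, by
    rintro (⟨⟨⟩⟩ | x) (⟨⟨⟩⟩ | y)
    exact Iff.rfl, by
    rintro (⟨⟨⟩⟩ | x) (⟨⟨⟩⟩ | y)
    exact Iff.rfl⟩

def OGIso.sumEmp (A : OG) : OGIso (A.sum OG.emp) A :=
  ⟨Equiv.sumEmpty _ Empty, by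
    rintro (x | ⟨⟨⟩⟩) (y | ⟨⟨⟩⟩)
    exact Iff.rfl, by
    rintro (x | ⟨⟨⟩⟩) (y | ⟨⟨⟩⟩)
    exact Iff.rfl⟩

/-! ### The types -/

def ogSetoid (k : ℕ) : Setoid OG where
  r A B := EF k A B ∅
  iseqv := ⟨fun A => ((OGIso.refl A).ef k).mono (Set.empty_subset _),
    fun h => h.symm.mono (Set.empty_subset _),
    fun h h' => (h.trans h').mono (Set.empty_subset _)⟩

def Ty (k : ℕ) := Quotient (ogSetoid k)

def ty (k : ℕ) (A : OG) : Ty k := Quotient.mk (ogSetoid k) A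

theorem ty_eq_iff {k : ℕ} {A B : OG} : ty k A = ty k B ↔ EF k A B ∅ :=
  Quotient.eq (r := ogSetoid k)

theorem OGIso.ty_eq {A B : OG} (f : OGIso A B) (k : ℕ) : ty k A = ty k B :=
  ty_eq_iff.2 ((f.ef k).mono (Set.empty_subset _))

instance (k : ℕ) : Mul (Ty k) where
  mul := Quotient.map₂ OG.sum (fun _ _ h _ _ h' => (EF.sum h h').mono (Set.empty_subset _))

instance (k : ℕ) : One (Ty k) where
  one := ty k OG.emp

theorem ty_sum (k : ℕ) (A B : OG) : ty k (A.sum B) = ty k A * ty k B := rfl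

theorem ty_emp (k : ℕ) : ty k OG.emp = 1 := rfl

instance (k : ℕ) : Monoid (Ty k) where
  mul_assoc := by
    rintro ⟨A⟩ ⟨B⟩ ⟨C⟩
    exact (OGIso.assoc A B C).ty_eq k
  one_mul := by
    rintro ⟨A⟩
    exact (OGIso.empSum A).ty_eq k
  mul_one := by
    rintro ⟨A⟩
    exact (OGIso.sumEmp A).ty_eq k

/-! ### Aperiodicity -/

def OG.pow (A : OG) : ℕ → OG
  | 0 => OG.emp
  | n + 1 => A.sum (A.pow n)

theorem ty_pow (k : ℕ) (A : OG) (n : ℕ) : ty k (A.pow n) = ty k A ^ n := by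
  induction n with
  | zero => rfl
  | succ n ih => rw [pow_succ', ← ih]; rfl

theorem pow_split (A : OG) (n : ℕ) (c : (A.pow n).α) : ∃ i j, i + j + 1 = n ∧
    ∃ (a : A.α) (f : OGIso (A.pow n) ((A.pow i).sum (A.sum (A.pow j)))),
      f.toEquiv c = Sum.inr (Sum.inl a) := by
  induction n with
  | zero => exact Empty.elim c
  | succ n ih =>
    rcases c with a | c
    · exact ⟨0, n, by omega, a, (OGIso.empSum _).symm, rfl⟩
    · obtain ⟨i, j, h, a, f, hf⟩ := ih c
      refine ⟨i + 1, j, by omega, a,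
        ((OGIso.refl A).sumCongr f).trans (OGIso.assoc A (A.pow i) _).symm, ?_⟩
      change (OGIso.assoc A (A.pow i) _).toEquiv.symm (Sum.inr (f.toEquiv c)) = _
      rw [hf]
      rfl

theorem pow_join (A : OG) (i j : ℕ) :
    Nonempty (OGIso ((A.pow i).sum (A.sum (A.pow j))) (A.pow (i + j + 1))) := by
  induction i with
  | zero => 
    rw [Nat.zero_add]
    exact ⟨OGIso.empSum _⟩
  | succ i ih =>
    obtain ⟨f⟩ := ih
    rw [show i + 1 + j + 1 = (i + j + 1) + 1 by omega]
    exact ⟨(OGIso.assoc A (A.pow i) _).trans ((OGIso.refl A).sumCongr f)⟩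

/-- moving one point through powers -/
theorem pow_move {k : ℕ} (A : OG) {n i' j' : ℕ} (c : (A.pow n).α) {i j : ℕ} {a : A.α}
    (f : OGIso (A.pow n) ((A.pow i).sum (A.sum (A.pow j))))
    (hf : f.toEquiv c = Sum.inr (Sum.inl a))
    (hi : EF k (A.pow i) (A.pow i') ∅) (hj : EF k (A.pow j) (A.pow j') ∅) :
    ∃ d, EF k (A.pow n) (A.pow (i' + j' + 1)) {(c, d)} := by
  obtain ⟨g⟩ := pow_join A i' j'
  refine ⟨g.toEquiv (Sum.inr (Sum.inl a)),
    (((f.ef k).trans (hi.sum (((OGIso.refl A).ef k).sum hj))).trans (g.ef k)).mono ?_⟩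
  rintro _ rfl
  refine ⟨Sum.inr (Sum.inl a), ⟨Sum.inr (Sum.inl a), hf.symm, ?_⟩, rfl⟩
  exact Or.inr ⟨_, Or.inl ⟨(a, a), rfl, rfl⟩, rfl⟩

theorem ef_refl (k : ℕ) (A : OG) : EF k A A ∅ := (ogSetoid k).refl A

theorem ef_aper (k : ℕ) : ∃ m, ∀ (A : OG) (n : ℕ), m ≤ n → EF k (A.pow n) (A.pow (n + 1)) ∅ := by
  induction k with
  | zero => exact ⟨0, fun A n _ x hx => absurd hx (Set.notMem_empty _)⟩
  | succ k ih =>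
    obtain ⟨m, hm⟩ := ih
    refine ⟨2 * m + 1, fun A n hn => ⟨fun c => ?_, fun d => ?_, fun x hx => absurd hx (Set.notMem_empty _)⟩⟩
    · obtain ⟨i, j, hij, a, f, hf⟩ := pow_split A n c
      simp only [insert_empty_eq]
      rcases le_or_gt m i with h | h
      · have := pow_move A c f hf (hm A i h) (ef_refl k _)
        rwa [show i + 1 + j + 1 = n + 1 by omega] at this
      · have := pow_move A c f hf (ef_refl k _) (hm A j (by omega))
        rwa [show i + (j + 1) + 1 = n + 1 by omega] at this
    · obtain ⟨i, j, hij, a, f, hf⟩ := pow_split A (n + 1) d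
      simp only [insert_empty_eq]
      have key : ∃ c, EF k (A.pow (n + 1)) (A.pow n) {(d, c)} := by
        rcases le_or_gt (m + 1) i with h | h
        · obtain ⟨i, rfl⟩ : ∃ i', i = i' + 1 := ⟨i - 1, by omega⟩
          have := pow_move A d f hf ((ogSetoid k).symm (hm A i (by omega))) (ef_refl k _)
          rwa [show i + j + 1 = n by omega] at this
        · obtain ⟨j, rfl⟩ : ∃ j', j = j' + 1 := ⟨j - 1, by omega⟩
          have := pow_move A d f hf (ef_refl k _) ((ogSetoid k).symm (hm A j (by omega)))
          rwa [show i + j + 1 = n by omega] at this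
      obtain ⟨c, hc⟩ := key
      refine ⟨c, hc.symm.mono ?_⟩
      rintro _ rfl
      exact rfl

theorem ty_aper (k : ℕ) : ∃ m, ∀ x : Ty k, x ^ (m + 1) = x ^ m := by
  obtain ⟨m, hm⟩ := ef_aper k
  refine ⟨m, ?_⟩
  rintro ⟨A⟩
  have := ty_eq_iff.2 (hm A m le_rfl)
  rw [ty_pow, ty_pow] at this
  exact this.symm

/-! ### Finiteness -/

def FT : ℕ → ℕ → Type
  | 0, r => Fin r → Fin r → Prop × Prop × Prop
  | k + 1, r => Set (FT k (r + 1)) × (Fin r → Fin r → Prop × Prop × Prop)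

theorem FT_finite (k r : ℕ) : Finite (FT k r) := by
  induction k generalizing r with
  | zero => unfold FT; infer_instance
  | succ k ih =>
    unfold FT
    have := ih (r + 1)
    infer_instance

def at0 (A : OG) {r : ℕ} (v : Fin r → A.α) : Fin r → Fin r → Prop × Prop × Prop :=
  fun i j => (v i = v j, A.le (v i) (v j), A.adj (v i) (v j))

def tau : (k : ℕ) → (A : OG) → {r : ℕ} → (Fin r → A.α) → FT k r
  | 0, A, _, v => at0 A v
  | k + 1, A, _, v => (Set.range fun a => tau k A (Fin.snoc v a : Fin (_ + 1) → A.α), at0 A v)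

theorem at0_pres {A B : OG} {r : ℕ} {v : Fin r → A.α} {w : Fin r → B.α} (h : at0 A v = at0 B w) :
    AtomPres A B (Set.range fun i => (v i, w i)) := by
  rintro _ ⟨i, rfl⟩ _ ⟨j, rfl⟩
  have := congrFun (congrFun h i) j
  simp only [at0, Prod.mk.injEq, eq_iff_iff] at this
  exact this

theorem range_snoc {A B : OG} {r : ℕ} (v : Fin r → A.α) (w : Fin r → B.α) (a : A.α) (b : B.α) :
    (Set.range fun i => ((Fin.snoc v a : Fin (r + 1) → A.α) i, (Fin.snoc w b : Fin (r + 1) → B.α) i))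
      = insert (a, b) (Set.range fun i => (v i, w i)) := by
  ext x
  constructor
  · rintro ⟨i, rfl⟩
    refine Fin.lastCases ?_ (fun i => ?_) i
    · left; simp
    · right; exact ⟨i, by simp⟩
  · rintro (rfl | ⟨i, rfl⟩)
    · exact ⟨Fin.last r, by simp⟩
    · exact ⟨i.castSucc, by simp⟩

theorem tau_ef {k : ℕ} {A B : OG} {r : ℕ} {v : Fin r → A.α} {w : Fin r → B.α}
    (h : tau k A v = tau k B w) : EF k A B (Set.range fun i => (v i, w i)) := by
  induction k generalizing r with
  | zero => exact at0_pres h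
  | succ k ih =>
    have h1 := congrArg Prod.fst h
    have h2 := congrArg Prod.snd h
    simp only [tau] at h1 h2
    refine ⟨fun a => ?_, fun b => ?_, at0_pres h2⟩
    · have : tau k A (Fin.snoc v a : Fin (r + 1) → A.α) ∈ Set.range fun b => tau k B (Fin.snoc w b : Fin (r + 1) → B.α) := by
        rw [← h1]; exact ⟨a, rfl⟩
      obtain ⟨b, hb⟩ := this
      refine ⟨b, ?_⟩
      rw [← range_snoc]
      exact ih hb.symm
    · have : tau k B (Fin.snoc w b : Fin (r + 1) → B.α) ∈ Set.range fun a => tau k A (Fin.snoc v a : Fin (r + 1) → A.α) := by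
        rw [h1]; exact ⟨b, rfl⟩
      obtain ⟨a, hb⟩ := this
      refine ⟨a, ?_⟩
      rw [← range_snoc]
      exact ih hb

instance (k : ℕ) : Finite (Ty k) := by
  have := FT_finite k 0
  refine Finite.of_injective (fun x : Ty k => tau k (Quotient.out x) (r := 0) Fin.elim0) ?_
  intro x y h
  have h1 := tau_ef h
  have h2 : ty k (Quotient.out x) = ty k (Quotient.out y) :=
    ty_eq_iff.2 (h1.mono (Set.empty_subset _))
  exact (Quotient.out_eq (s := ogSetoid k) x).symm.trans (h2.trans (Quotient.out_eq (s := ogSetoid k) y))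

/-! ### Games and formulas -/

theorem term_realize {n : ℕ} (t : Lle.Term (Empty ⊕ Fin n)) :
    ∃ i : Fin n, ∀ (A : OG) (xs : Fin n → A.α) (v : Empty → A.α),
      @Language.Term.realize _ _ A.str _ (Sum.elim v xs) t = xs i := by
  cases t with
  | var x =>
    rcases x with x | i
    · exact x.elim
    · exact ⟨i, fun A xs v => rfl⟩
  | func f _ => exact Empty.elim f

theorem ef_formula {n : ℕ} (φ : Lle.BoundedFormula Empty n) :
    ∃ k, ∀ (A B : OG) (xs : Fin n → A.α) (ys : Fin n → B.α) (v : Empty → A.α) (w : Empty → B.α),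
      EF k A B (Set.range fun i => (xs i, ys i)) →
      (@Language.BoundedFormula.Realize _ _ A.str _ _ φ v xs ↔
        @Language.BoundedFormula.Realize _ _ B.str _ _ φ w ys) := by
  induction φ with
  | falsum => exact ⟨0, fun _ _ _ _ _ _ _ => Iff.rfl⟩
  | equal t₁ t₂ =>
    obtain ⟨i, hi⟩ := term_realize t₁
    obtain ⟨j, hj⟩ := term_realize t₂
    refine ⟨0, fun A B xs ys v w h => ?_⟩
    simp only [Language.BoundedFormula.Realize, hi, hj]
    exact (h _ ⟨i, rfl⟩ _ ⟨j, rfl⟩).1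
  | rel R ts =>
    refine ⟨0, fun A B xs ys v w h => ?_⟩
    cases R with
    | adj =>
      obtain ⟨i, hi⟩ := term_realize (ts 0)
      obtain ⟨j, hj⟩ := term_realize (ts 1)
      change A.adj (@Language.Term.realize _ _ A.str _ (Sum.elim v xs) (ts 0))
          (@Language.Term.realize _ _ A.str _ (Sum.elim v xs) (ts 1)) ↔
        B.adj (@Language.Term.realize _ _ B.str _ (Sum.elim w ys) (ts 0))
          (@Language.Term.realize _ _ B.str _ (Sum.elim w ys) (ts 1))
      rw [hi, hj, hi, hj]
      exact (h _ ⟨i, rfl⟩ _ ⟨j, rfl⟩).2.2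
    | le =>
      obtain ⟨i, hi⟩ := term_realize (ts 0)
      obtain ⟨j, hj⟩ := term_realize (ts 1)
      change A.le (@Language.Term.realize _ _ A.str _ (Sum.elim v xs) (ts 0))
          (@Language.Term.realize _ _ A.str _ (Sum.elim v xs) (ts 1)) ↔
        B.le (@Language.Term.realize _ _ B.str _ (Sum.elim w ys) (ts 0))
          (@Language.Term.realize _ _ B.str _ (Sum.elim w ys) (ts 1))
      rw [hi, hj, hi, hj]
      exact (h _ ⟨i, rfl⟩ _ ⟨j, rfl⟩).2.1
  | imp f₁ f₂ ih1 ih2 =>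
    obtain ⟨k1, h1⟩ := ih1
    obtain ⟨k2, h2⟩ := ih2
    refine ⟨max k1 k2, fun A B xs ys v w h => ?_⟩
    simp only [Language.BoundedFormula.Realize]
    rw [h1 A B xs ys v w (h.le (le_max_left _ _)), h2 A B xs ys v w (h.le (le_max_right _ _))]
  | all f ih =>
    obtain ⟨k, hk⟩ := ih
    refine ⟨k + 1, fun A B xs ys v w h => ?_⟩
    simp only [Language.BoundedFormula.Realize]
    constructor
    · intro H b
      obtain ⟨a, ha⟩ := h.2.1 b
      rw [← range_snoc] at ha
      exact (hk A B _ _ v w ha).1 (H a)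
    · intro H a
      obtain ⟨b, ha⟩ := h.1 a
      rw [← range_snoc] at ha
      exact (hk A B _ _ v w ha).2 (H b)

theorem sat_ty (ψ : Lle.Sentence) : ∃ (k : ℕ) (χ : Ty k → Prop), ∀ A : OG, A.Sat ψ ↔ χ (ty k A) := by
  obtain ⟨k, hk⟩ := ef_formula ψ
  refine ⟨k, fun x => ∃ B : OG, B.Sat ψ ∧ ty k B = x, fun A => ⟨fun h => ⟨A, h, rfl⟩, ?_⟩⟩
  rintro ⟨B, hB, h⟩
  rw [ty_eq_iff] at h
  exact (hk B A _ _ _ _ (h.mono (by rintro _ ⟨i, _⟩; exact i.elim0))).1 hB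

/-! ### The absorbing type -/

theorem exists_absorbing {S : Type*} [Monoid S] [Finite S] (T : Submonoid S)
    (hap : ∃ m, ∀ x : S, x ^ (m + 1) = x ^ m) : ∃ e ∈ T, ∀ x ∈ T, e * x * e = e := by
  classical
  obtain ⟨m, hm⟩ := hap
  have hm' : ∀ (x : S) (j : ℕ), x ^ (m + j) = x ^ m := by
    intro x j
    induction j with
    | zero => rfl
    | succ j ih => rw [← add_assoc, pow_succ, ih, ← pow_succ, hm]
  let V : S → Set S := fun e => {z | ∃ s ∈ T, z = e * s * e}
  obtain ⟨e0, he0, hmin⟩ := Set.exists_min_image (T : Set S) (fun e => (V e).ncard)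
    (Set.toFinite _) ⟨1, T.one_mem⟩
  have hsub : ∀ e ∈ T, ∀ x ∈ T, V (e * x * e) ⊆ V e := by
    rintro e he x hx _ ⟨s, hs, rfl⟩
    exact ⟨x * e * s * (e * x), by
      exact T.mul_mem (T.mul_mem (T.mul_mem hx he) hs) (T.mul_mem he hx), by simp only [mul_assoc]⟩
  have hpow : ∀ e ∈ T, ∀ j, V (e ^ (j + 1)) ⊆ V e := by
    rintro e he j _ ⟨s, hs, rfl⟩
    refine ⟨e ^ j * s * e ^ j, T.mul_mem (T.mul_mem (T.pow_mem he _) hs) (T.pow_mem he _), ?_⟩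
    nth_rw 1 [pow_succ']
    rw [pow_succ]
    simp only [mul_assoc]
  have heq : ∀ y ∈ T, V y ⊆ V e0 → V y = V e0 := fun y hy h =>
    Set.eq_of_subset_of_ncard_le h (hmin y hy) (Set.toFinite _)
  -- idempotent
  set e := e0 ^ (m + 1) with he
  have heT : e ∈ T := T.pow_mem he0 _
  have hVe : V e = V e0 := heq e heT (hpow e0 he0 m)
  have hid : e * e = e := by
    rw [he, ← pow_add, show m + 1 + (m + 1) = m + (m + 2) by omega, hm', hm']
  refine ⟨e, heT, fun x hx => ?_⟩
  set y := e * x * e with hy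
  have hyT : y ∈ T := T.mul_mem (T.mul_mem heT hx) heT
  have hyV : V y ⊆ V e0 := hVe ▸ hsub e heT x hx
  have hyp : V (y ^ (m + 1)) = V e0 :=
    heq _ (T.pow_mem hyT _) ((hpow y hyT m).trans hyV)
  have hmem : e ∈ V (y ^ (m + 1)) := by
    rw [hyp, ← hVe]
    exact ⟨1, T.one_mem, by rw [mul_one, hid]⟩
  obtain ⟨s, hs, hes⟩ := hmem
  have h1 : y * e = e := by
    conv_lhs => rw [hes]
    conv_rhs => rw [hes]
    rw [← mul_assoc, ← mul_assoc, ← pow_succ', show m + 1 + 1 = m + 2 by omega, hm', hm']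
  have h2 : y * e = y := by rw [hy, mul_assoc, hid]
  rw [← h2, h1]


/-! ### Intervals of graphs on the natural numbers -/

def Iv (R : ℕ → ℕ → Prop) (a b : ℕ) : OG :=
  ⟨{x : ℕ // a ≤ x ∧ x < b}, fun x y => x.1 ≤ y.1, fun x y => R x.1 y.1⟩

def cutEquiv {a c b : ℕ} (hac : a ≤ c) (hcb : c ≤ b) :
    {x : ℕ // a ≤ x ∧ x < c} ⊕ {x : ℕ // c ≤ x ∧ x < b} ≃ {x : ℕ // a ≤ x ∧ x < b} where
  toFun := Sum.elim (fun x => ⟨x.1, x.2.1, x.2.2.trans_le hcb⟩)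
    (fun x => ⟨x.1, hac.trans x.2.1, x.2.2⟩)
  invFun x := if hx : x.1 < c then Sum.inl ⟨x.1, x.2.1, hx⟩
    else Sum.inr ⟨x.1, not_lt.1 hx, x.2.2⟩
  left_inv := by
    rintro (x | x)
    · have := x.2.2
      simp [this]
    · have := x.2.1
      simp [this]
  right_inv := by
    intro x
    by_cases hx : x.1 < c <;> simp [hx]

def shiftEquiv (a a' n : ℕ) :
    {x : ℕ // a ≤ x ∧ x < a + n} ≃ {x : ℕ // a' ≤ x ∧ x < a' + n} where
  toFun x := ⟨a' + (x.1 - a), by have := x.2; omega⟩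
  invFun x := ⟨a + (x.1 - a'), by have := x.2; omega⟩
  left_inv x := by
    have := x.2
    apply Subtype.ext
    simp only
    omega
  right_inv x := by
    have := x.2
    apply Subtype.ext
    simp only
    omega

def finIvEquiv (n : ℕ) : Fin n ≃ {x : ℕ // 0 ≤ x ∧ x < n} where
  toFun x := ⟨x.1, Nat.zero_le _, x.2⟩
  invFun x := ⟨x.1, x.2.2⟩
  left_inv _ := rfl
  right_inv _ := rfl

theorem ty_cut (k : ℕ) (R : ℕ → ℕ → Prop) {a c b : ℕ} (hac : a ≤ c) (hcb : c ≤ b)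
    (h : ∀ x y, x < c → c ≤ y → ¬ R x y ∧ ¬ R y x) :
    ty k (Iv R a b) = ty k (Iv R a c) * ty k (Iv R c b) := by
  rw [← ty_sum]
  symm
  refine OGIso.ty_eq ⟨cutEquiv hac hcb, ?_, ?_⟩ k
  · rintro (x | x) (y | y)
    · exact Iff.rfl
    · exact ⟨fun _ => (x.2.2.trans_le y.2.1).le, fun _ => trivial⟩
    · exact ⟨fun h => h.elim, fun h => absurd (show x.1 ≤ y.1 from h) (not_le.2 (y.2.2.trans_le x.2.1))⟩
    · exact Iff.rfl
  · rintro (x | x) (y | y)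
    · exact Iff.rfl
    · exact ⟨fun h => h.elim, fun h' => (h x.1 y.1 x.2.2 y.2.1).1 h'⟩
    · exact ⟨fun h => h.elim, fun h' => (h y.1 x.1 y.2.2 x.2.1).2 h'⟩
    · exact Iff.rfl

theorem ty_shift (k : ℕ) (R R' : ℕ → ℕ → Prop) (a a' n : ℕ)
    (h : ∀ i j, i < n → j < n → (R (a + i) (a + j) ↔ R' (a' + i) (a' + j))) :
    ty k (Iv R a (a + n)) = ty k (Iv R' a' (a' + n)) := by
  refine OGIso.ty_eq ⟨shiftEquiv a a' n, ?_, ?_⟩ k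
  · intro x y
    have := x.2
    have := y.2
    change x.1 ≤ y.1 ↔ a' + (x.1 - a) ≤ a' + (y.1 - a)
    omega
  · intro x y
    have hx := x.2
    have hy := y.2
    have := h (x.1 - a) (y.1 - a) (by omega) (by omega)
    rw [Nat.add_sub_cancel' hx.1, Nat.add_sub_cancel' hy.1] at this
    exact this

theorem sat_Iv (ψ : Lle.Sentence) {n : ℕ} (ω : Sample n) (k : ℕ) (χ : Ty k → Prop)
    (h : ∀ A : OG, A.Sat ψ ↔ χ (ty k A)) : SatLe ω ψ ↔ χ (ty k (Iv (adjVal ω) 0 n)) := by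
  have h1 : SatLe ω ψ ↔ (OG.mk (Fin n) (· ≤ ·) (sampleAdj ω)).Sat ψ := Iff.rfl
  rw [h1, h]
  have : ty k (OG.mk (Fin n) (· ≤ ·) (sampleAdj ω)) = ty k (Iv (adjVal ω) 0 n) := by
    exact OGIso.ty_eq ⟨finIvEquiv n, fun x y => Iff.rfl, fun x y => Iff.rfl⟩ k
  rw [this]

structure Adm (p : ℕ → ℝ) (R : ℕ → ℕ → Prop) : Prop where
  symm : ∀ x y, R x y → R y x
  irr : ∀ x, ¬ R x x
  pos : ∀ x y, x < y → R x y → 0 < p (y - x)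

theorem Adm.shift {p : ℕ → ℝ} {R : ℕ → ℕ → Prop} (h : Adm p R) (a : ℕ) :
    Adm p (fun i j => R (a + i) (a + j)) :=
  ⟨fun x y => h.symm _ _, fun x => h.irr _, fun x y hxy hR => by
    have := h.pos _ _ (Nat.add_lt_add_left hxy a) hR
    rwa [Nat.add_sub_add_left] at this⟩

def admT (p : ℕ → ℝ) (k : ℕ) : Submonoid (Ty k) where
  carrier := {t | ∃ R n, Adm p R ∧ t = ty k (Iv R 0 n)}
  one_mem' := by
    refine ⟨fun _ _ => False, 0, ⟨fun _ _ h => h, fun _ h => h, fun _ _ _ h => h.elim⟩, ?_⟩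
    rw [← ty_emp]
    have : IsEmpty {x : ℕ // 0 ≤ x ∧ x < 0} := ⟨fun x => by have := x.2; omega⟩
    exact OGIso.ty_eq ⟨Equiv.equivOfIsEmpty Empty {x : ℕ // 0 ≤ x ∧ x < 0},
      fun x => Empty.elim x, fun x => Empty.elim x⟩ k
  mul_mem' := by
    rintro _ _ ⟨R, n, hR, rfl⟩ ⟨R', n', hR', rfl⟩
    refine ⟨fun i j => (i < n ∧ j < n ∧ R i j) ∨ (n ≤ i ∧ n ≤ j ∧ R' (i - n) (j - n)), n + n',
      ⟨?_, ?_, ?_⟩, ?_⟩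
    · rintro x y (⟨h1, h2, h3⟩ | ⟨h1, h2, h3⟩)
      · exact Or.inl ⟨h2, h1, hR.symm _ _ h3⟩
      · exact Or.inr ⟨h2, h1, hR'.symm _ _ h3⟩
    · rintro x (⟨h1, h2, h3⟩ | ⟨h1, h2, h3⟩)
      · exact hR.irr _ h3
      · exact hR'.irr _ h3
    · rintro x y hxy (⟨h1, h2, h3⟩ | ⟨h1, h2, h3⟩)
      · exact hR.pos _ _ hxy h3
      · have := hR'.pos _ _ (by omega) h3
        rwa [show y - n - (x - n) = y - x by omega] at this
    · rw [ty_cut k _ (Nat.zero_le n) (Nat.le_add_right n n')]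
      · congr 1
        · have := ty_shift k R (fun i j => (i < n ∧ j < n ∧ R i j) ∨
            (n ≤ i ∧ n ≤ j ∧ R' (i - n) (j - n))) 0 0 n (by
              intro i j hi hj
              simp only [Nat.zero_add]
              constructor
              · intro h; exact Or.inl ⟨hi, hj, h⟩
              · rintro (h | h)
                · exact h.2.2
                · omega)
          simpa using this
        · have := ty_shift k R' (fun i j => (i < n ∧ j < n ∧ R i j) ∨
            (n ≤ i ∧ n ≤ j ∧ R' (i - n) (j - n))) 0 n n' (by
              intro i j hi hj
              simp only [Nat.zero_add, Nat.add_sub_cancel_left]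
              constructor
              · intro h; exact Or.inr ⟨by omega, by omega, h⟩
              · rintro (h | h)
                · omega
                · exact h.2.2)
          simpa using this
      · intro x y hx hy
        constructor <;> rintro (h | h) <;> omega

theorem Adm.mem {p : ℕ → ℝ} {R : ℕ → ℕ → Prop} (h : Adm p R) (k : ℕ) {a b : ℕ} (hab : a ≤ b) :
    ty k (Iv R a b) ∈ admT p k := by
  obtain ⟨n, rfl⟩ := Nat.exists_eq_add_of_le hab
  refine ⟨_, n, h.shift a, ?_⟩
  have := ty_shift k R (fun i j => R (a + i) (a + j)) a 0 n (by simp)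
  simpa using this

def Cut (R : ℕ → ℕ → Prop) (c : ℕ) : Prop := ∀ x y, x < c → c ≤ y → ¬ R x y

structure Marker (R W : ℕ → ℕ → Prop) (w a : ℕ) : Prop where
  cut1 : Cut R a
  cut2 : Cut R (a + w)
  eq : ∀ i j, i < w → j < w → (R (a + i) (a + j) ↔ W i j)

theorem marker_ty {p : ℕ → ℝ} {R W : ℕ → ℕ → Prop} {w a : ℕ} (hR : Adm p R)
    (hm : Marker R W w a) (k : ℕ) {s t : ℕ} (hs : s ≤ a) (ht : a + w ≤ t) :
    ty k (Iv R s t) = ty k (Iv R s a) * ty k (Iv W 0 w) * ty k (Iv R (a + w) t) := by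
  have hc : ∀ {c}, Cut R c → ∀ x y, x < c → c ≤ y → ¬ R x y ∧ ¬ R y x :=
    fun h x y hx hy => ⟨h x y hx hy, fun h' => h x y hx hy (hR.symm _ _ h')⟩
  rw [ty_cut k R hs (by omega : a ≤ t) (hc hm.cut1), ty_cut k R (by omega : a ≤ a + w) ht (hc hm.cut2),
    mul_assoc]
  congr 2
  have := ty_shift k R W a 0 w (by simpa using hm.eq)
  simpa using this

theorem ty_determined {p : ℕ → ℝ} {R W : ℕ → ℕ → Prop} {w k : ℕ} (hR : Adm p R)
    (habs : ∀ x ∈ admT p k, ty k (Iv W 0 w) * x * ty k (Iv W 0 w) = ty k (Iv W 0 w))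
    {a b T u n : ℕ} (ha : Marker R W w a) (hb : Marker R W w b) (h1 : a + w ≤ T) (h2 : T ≤ u)
    (h3 : u ≤ b) (h4 : b + w ≤ n) :
    ty k (Iv R 0 n) = ty k (Iv R 0 T) * ty k (Iv R u n) := by
  rw [marker_ty hR ha k (Nat.zero_le _) (by omega : a + w ≤ n),
    marker_ty hR hb k (by omega : a + w ≤ b) h4,
    marker_ty hR ha k (Nat.zero_le _) h1,
    marker_ty hR hb k h3 h4]
  have e1 := habs _ (hR.mem k (by omega : a + w ≤ b))
  have e2 := habs _ ((admT p k).mul_mem (hR.mem k h1) (hR.mem k h3))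
  generalize ty k (Iv W 0 w) = e at *
  generalize ty k (Iv R 0 a) = x1 at *
  generalize ty k (Iv R (a + w) b) = x2 at *
  generalize ty k (Iv R (b + w) n) = x3 at *
  generalize ty k (Iv R (a + w) T) = x4 at *
  generalize ty k (Iv R u b) = x5 at *
  calc x1 * e * (x2 * e * x3) = x1 * (e * x2 * e) * x3 := by simp only [mul_assoc]
    _ = x1 * (e * (x4 * x5) * e) * x3 := by rw [e1, e2]
    _ = _ := by simp only [mul_assoc]

/-- The random graph is symmetric and irreflexive; adjacency unfolds. -/
theorem adjVal_lt {n : ℕ} (ω : Sample n) {x y : ℕ} (hxy : x < y) :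
    adjVal ω x y ↔ ∃ hy : y < n, ω ⟨(⟨x, hxy.trans hy⟩, ⟨y, hy⟩), hxy⟩ = true := by
  constructor
  · rintro ⟨⟨⟨⟨a, ha⟩, ⟨b, hb⟩⟩, hab⟩, he, (⟨h1, h2⟩ | ⟨h1, h2⟩)⟩
    · simp only at h1 h2
      subst h1 h2
      exact ⟨hb, he⟩
    · simp only [Fin.mk_lt_mk] at h1 h2 hab
      omega
  · rintro ⟨hy, h⟩
    exact ⟨_, h, Or.inl ⟨rfl, rfl⟩⟩

theorem adjVal_symm {n : ℕ} (ω : Sample n) {x y : ℕ} (h : adjVal ω x y) : adjVal ω y x := by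
  obtain ⟨e, he, h⟩ := h
  exact ⟨e, he, h.symm⟩

theorem adjVal_irr {n : ℕ} (ω : Sample n) (x : ℕ) : ¬ adjVal ω x x := by
  rintro ⟨e, he, h⟩
  have := e.2
  rw [Fin.lt_def] at this
  omega

theorem adm_adjVal {p : ℕ → ℝ} {n : ℕ} (ω : Sample n)
    (h : ∀ e : EdgeIdx n, ω e = true → 0 < p (e.1.2.val - e.1.1.val)) : Adm p (adjVal ω) :=
  ⟨fun _ _ => adjVal_symm ω, adjVal_irr ω, fun x y hxy hR => by
    obtain ⟨hy, h'⟩ := (adjVal_lt ω hxy).1 hR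
    exact h _ h'⟩


/-! ### Product measures of coins -/

section Coins

open MeasureTheory ProbabilityTheory

noncomputable def bern (q : unitInterval) : Measure Bool :=
  ENNReal.ofReal q.1 • Measure.dirac true + ENNReal.ofReal (1 - q.1) • Measure.dirac false

instance (q : unitInterval) : IsProbabilityMeasure (bern q) := ⟨by
  have h0 := q.2.1
  have h1 : 0 ≤ 1 - q.1 := sub_nonneg.2 q.2.2
  simp only [bern, Measure.coe_add, Measure.coe_smul, Pi.add_apply, Pi.smul_apply, measure_univ,
    smul_eq_mul, mul_one]
  rw [← ENNReal.ofReal_add h0 h1]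
  simp⟩

theorem bern_real (q : unitInterval) (b : Bool) :
    (bern q).real {b} = if b then q.1 else 1 - q.1 := by
  have h0 := q.2.1
  have h1 : 0 ≤ 1 - q.1 := sub_nonneg.2 q.2.2
  have h2 := q.2.2
  cases b <;> simp [bern, Measure.real, h0, h2]

variable {E : Type} [Fintype E]

noncomputable def mu (q : E → unitInterval) : Measure (E → Bool) := Measure.pi fun e => bern (q e)

instance (q : E → unitInterval) : IsProbabilityMeasure (mu q) := by
  unfold mu; infer_instance

theorem mu_singleton (q : E → unitInterval) (ω : E → Bool) :
    (mu q).real {ω} = ∏ e, if ω e then (q e).1 else 1 - (q e).1 := by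
  unfold mu Measure.real
  rw [Measure.pi_singleton, ENNReal.toReal_prod]
  exact Finset.prod_congr rfl fun e _ => bern_real _ _

theorem mu_box [DecidableEq E] (q : E → unitInterval) (S : Finset E) (τ : E → Bool) :
    (mu q).real {ω | ∀ e ∈ S, ω e = τ e} = ∏ e ∈ S, if τ e then (q e).1 else 1 - (q e).1 := by
  have : {ω : E → Bool | ∀ e ∈ S, ω e = τ e} =
      Set.pi Set.univ (fun e => if e ∈ S then {τ e} else Set.univ) := by
    ext ω
    simp only [Set.mem_ofPred_eq, Set.mem_pi, Set.mem_univ, true_implies]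
    refine forall_congr' fun e => ?_
    by_cases h : e ∈ S <;> simp [h]
  rw [this]
  unfold mu Measure.real
  rw [Measure.pi_pi, ENNReal.toReal_prod, ← Finset.prod_subset (Finset.subset_univ S)]
  · refine Finset.prod_congr rfl fun e he => ?_
    rw [if_pos he]
    exact bern_real _ _
  · intro e _ he
    rw [if_neg he, measure_univ]
    rfl

theorem mu_indepFun (q : E → unitInterval) : iIndepFun (fun e (ω : E → Bool) => ω e) (mu q) :=
  iIndepFun_pi (X := fun _ b => b) (fun _ => aemeasurable_id)

theorem mu_map (q : E → unitInterval) {E' : Type} [Fintype E'] (f : E' → E)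
    (hf : Function.Injective f) : (mu q).map (fun ω e => ω (f e)) = mu (fun e => q (f e)) := by
  have h := (mu_indepFun q).precomp hf
  rw [iIndepFun_iff_map_fun_eq_pi_map (fun i => (measurable_pi_apply _).aemeasurable)] at h
  rw [h]
  unfold mu
  congr 1
  funext i
  exact (measurePreserving_eval (fun e => bern (q e)) (f i)).map_eq

theorem mu_map_real (q : E → unitInterval) {E' : Type} [Fintype E'] (f : E' → E)
    (hf : Function.Injective f) (P : (E' → Bool) → Prop) :
    (mu q).real {ω | P (fun e => ω (f e))} = (mu (fun e => q (f e))).real {ω | P ω} := by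
  rw [← mu_map q f hf, measureReal_def, measureReal_def, Measure.map_apply]
  · rfl
  · exact measurable_pi_lambda _ fun e => measurable_pi_apply _
  · exact (Set.toFinite _).measurableSet

theorem mu_indep [DecidableEq E] (q : E → unitInterval) (S : Finset E) (A B : Set (E → Bool))
    (hA : ∀ ω ω' : E → Bool, (∀ e, e ∉ S → ω e = ω' e) → ω ∈ A → ω' ∈ A)
    (hB : ∀ ω ω' : E → Bool, (∀ e ∈ S, ω e = ω' e) → ω ∈ B → ω' ∈ B) :
    (mu q).real (A ∩ B) = (mu q).real A * (mu q).real B := by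
  have h := (mu_indepFun q).indepFun_finset Sᶜ S disjoint_compl_left
    (fun e => measurable_pi_apply e)
  have hA' : A = (fun (a : E → Bool) (i : (Sᶜ : Finset E)) => a i) ⁻¹'
      ((fun (a : E → Bool) (i : (Sᶜ : Finset E)) => a i) '' A) := by
    refine Set.Subset.antisymm (Set.subset_preimage_image _ _) ?_
    rintro ω ⟨ω', h', he⟩
    exact hA ω' ω (fun e hes => congrFun he ⟨e, Finset.mem_compl.2 hes⟩) h'
  have hB' : B = (fun (a : E → Bool) (i : S) => a i) ⁻¹'
      ((fun (a : E → Bool) (i : S) => a i) '' B) := by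
    refine Set.Subset.antisymm (Set.subset_preimage_image _ _) ?_
    rintro ω ⟨ω', h', he⟩
    exact hB ω' ω (fun e hes => congrFun he ⟨e, hes⟩) h'
  have := h.measure_inter_preimage_eq_mul
    ((fun (a : E → Bool) (i : (Sᶜ : Finset E)) => a i) '' A)
    ((fun (a : E → Bool) (i : S) => a i) '' B) (Set.toFinite _).measurableSet
    (Set.toFinite _).measurableSet
  rw [← hA', ← hB'] at this
  rw [measureReal_def, this, ENNReal.toReal_mul]
  rfl

theorem mu_no_box [DecidableEq E] (q : E → unitInterval) (S : ℕ → Finset E) (τ : ℕ → E → Bool)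
    (J : ℕ) (hS : ∀ i j, i < j → j < J → Disjoint (S i) (S j)) (δ : ℝ)
    (hδ : ∀ j < J, δ ≤ ∏ e ∈ S j, if τ j e then (q e).1 else 1 - (q e).1) (h1 : δ ≤ 1) :
    (mu q).real {ω | ∀ j < J, ¬ ∀ e ∈ S j, ω e = τ j e} ≤ (1 - δ) ^ J := by
  induction J with
  | zero => simp
  | succ J ih =>
    have ih' := ih (fun i j hij hj => hS i j hij (by omega)) (fun j hj => hδ j (by omega))
    set A := {ω : E → Bool | ∀ j < J, ¬ ∀ e ∈ S j, ω e = τ j e} with hA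
    set B := {ω : E → Bool | ∀ e ∈ S J, ω e = τ J e} with hB
    have hAB : {ω : E → Bool | ∀ j < J + 1, ¬ ∀ e ∈ S j, ω e = τ j e} = A \ B := by
      ext ω
      simp only [Set.mem_ofPred_eq, hA, hB, Set.mem_sdiff]
      constructor
      · intro h
        exact ⟨fun j hj => h j (by omega), h J (by omega)⟩
      · rintro ⟨h, h'⟩ j hj
        rcases Nat.lt_succ_iff_lt_or_eq.1 hj with hj | rfl
        · exact h j hj
        · exact h'
    rw [hAB]
    have hind : (mu q).real (A ∩ B) = (mu q).real A * (mu q).real B := by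
      refine mu_indep q (S J) A B ?_ ?_
      · intro ω ω' h hω j hj hb
        refine hω j hj fun e he => ?_
        rw [h e, hb e he]
        exact Finset.disjoint_left.1 (hS j J hj (by omega)) he
      · intro ω ω' h hω e he
        rw [← h e he, hω e he]
    have hd := measureReal_inter_add_sdiff (μ := mu q) (s := A) (t := B) (Set.toFinite _).measurableSet
    have hBδ : δ ≤ (mu q).real B := by
      rw [hB, mu_box]
      exact hδ J (by omega)
    have hA0 : 0 ≤ (mu q).real A := measureReal_nonneg
    calc (mu q).real (A \ B) = (mu q).real A * (1 - (mu q).real B) := by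
          rw [hind] at hd; linarith
      _ ≤ (mu q).real A * (1 - δ) := by gcongr
      _ ≤ (1 - δ) ^ J * (1 - δ) := by gcongr
      _ = _ := (pow_succ _ _).symm

/-- almost surely no edge of probability zero is present -/
theorem mu_null (q : E → unitInterval) :
    (mu q).real {ω | ¬ ∀ e, ω e = true → 0 < (q e).1} = 0 := by
  classical
  have : {ω : E → Bool | ¬ ∀ e, ω e = true → 0 < (q e).1} ⊆
      ⋃ e ∈ (Finset.univ.filter fun e => (q e).1 = 0), {ω | ∀ e' ∈ ({e} : Finset E), ω e' = true} := by
    intro ω h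
    simp only [Set.mem_ofPred_eq, not_forall] at h
    obtain ⟨e, he, h⟩ := h
    simp only [Set.mem_iUnion]
    refine ⟨e, ?_, by simpa using he⟩
    simpa using le_antisymm (not_lt.1 h) (q e).2.1
  refine le_antisymm ((measureReal_mono this (measure_ne_top _ _)).trans ?_) measureReal_nonneg
  refine (measureReal_biUnion_finset_le _ _).trans (Finset.sum_nonpos fun e he => ?_)
  have := mu_box q {e} (fun _ => true)
  rw [this]
  simpa using (Finset.mem_filter.1 he).2.le

end Coins


/-! ### Estimates -/

section Estimates

open MeasureTheory

theorem prod_inj_le {E F : Type*} [DecidableEq F] (S : Finset E) (U : Finset F) (g : E → F)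
    (hg : ∀ e ∈ S, g e ∈ U) (hinj : Set.InjOn g S) (f : F → ℝ)
    (h0 : ∀ u ∈ U, 0 ≤ f u) (h1 : ∀ u ∈ U, f u ≤ 1) :
    ∏ u ∈ U, f u ≤ ∏ e ∈ S, f (g e) := by
  rw [← Finset.prod_image (f := f) (g := g) hinj]
  have hsub : S.image g ⊆ U := by
    intro u hu
    obtain ⟨e, he, rfl⟩ := Finset.mem_image.1 hu
    exact hg e he
  rw [← Finset.prod_sdiff hsub]
  have ha : ∏ u ∈ U \ S.image g, f u ≤ 1 := Finset.prod_le_one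
    (fun u hu => h0 u (Finset.mem_sdiff.1 hu).1) (fun u hu => h1 u (Finset.mem_sdiff.1 hu).1)
  have hb : 0 ≤ ∏ u ∈ S.image g, f u := Finset.prod_nonneg (fun u hu => h0 u (hsub hu))
  nlinarith

theorem prod_union_ge {E : Type*} [DecidableEq E] (S U : Finset E) (f : E → ℝ)
    (h0 : ∀ e, 0 ≤ f e) (h1 : ∀ e, f e ≤ 1) :
    (∏ e ∈ S, f e) * ∏ e ∈ U, f e ≤ ∏ e ∈ S ∪ U, f e := by
  rw [← Finset.prod_union_inter]
  exact mul_le_of_le_one_right (Finset.prod_nonneg fun e _ => h0 e)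
    (Finset.prod_le_one (fun e _ => h0 e) (fun e _ => h1 e))

theorem cross_ge {p : ℕ → ℝ} (hp : ∀ i, 0 ≤ p i ∧ p i < 1) {n : ℕ} (S : Finset (EdgeIdx n))
    (I : Finset ℕ) (a : ℕ)
    (hS : ∀ e ∈ S, e.1.1.val < a ∧ a ≤ e.1.2.val ∧ e.1.2.val - e.1.1.val ∈ I) :
    ∏ i ∈ I, (1 - p i) ^ i ≤ ∏ e ∈ S, (1 - p (e.1.2.val - e.1.1.val)) := by
  have h := prod_inj_le S (I.sigma fun i => Finset.range i)
    (fun e => ⟨e.1.2.val - e.1.1.val, e.1.2.val - a⟩) (by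
      intro e he
      have := hS e he
      rw [Finset.mem_sigma]
      refine ⟨this.2.2, Finset.mem_range.2 ?_⟩
      simp only
      omega) (by
      intro e he e' he' h
      have h1 := hS e he
      have h2 := hS e' he'
      simp only [Sigma.mk.injEq, heq_eq_eq] at h
      apply Subtype.ext
      apply Prod.ext
      · apply Fin.ext; omega
      · apply Fin.ext; omega) (fun u => 1 - p u.1)
      (fun u _ => by have := (hp u.1).2; linarith) (fun u _ => by have := (hp u.1).1; linarith)
  rw [Finset.prod_sigma] at h
  simpa using h

theorem tail_ge {p : ℕ → ℝ} (hp : ∀ i, 0 ≤ p i ∧ p i < 1) {c : ℝ} (hc : 0 < c)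
    (hprod : ∀ n : ℕ, c ≤ ∏ i ∈ Finset.Icc 1 n, (1 - p i) ^ i) {η : ℝ} (hη : 0 < η) :
    ∃ ℓ : ℕ, ∀ n, 1 - η ≤ ∏ i ∈ Finset.Ioc ℓ n, (1 - p i) ^ i := by
  set F : ℕ → ℝ := fun n => ∏ i ∈ Finset.Icc 1 n, (1 - p i) ^ i with hF
  have hbdd : BddBelow (Set.range F) := ⟨c, by rintro _ ⟨n, rfl⟩; exact hprod n⟩
  obtain ⟨_, ⟨ℓ, rfl⟩, hℓ⟩ := exists_lt_of_csInf_lt (Set.range_nonempty F)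
    (show sInf (Set.range F) < sInf (Set.range F) + c * η by
      have := mul_pos hc hη
      linarith)
  refine ⟨ℓ, fun n => ?_⟩
  rcases le_or_gt ℓ n with h | h
  · have h1 : sInf (Set.range F) ≤ F n := csInf_le hbdd ⟨n, rfl⟩
    have h2 : F n = F ℓ * ∏ i ∈ Finset.Ioc ℓ n, (1 - p i) ^ i := by
      have e1 : ∀ m, Finset.Icc 1 m = Finset.Ioc 0 m := fun m => by ext i; simp; omega
      simp only [hF, e1]
      rw [Finset.prod_Ioc_consecutive _ (Nat.zero_le ℓ) h]
    have h3 : c ≤ F ℓ := hprod ℓ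
    have h4 : c * η ≤ F ℓ * η := by gcongr
    have h5 : F ℓ * (1 - η) ≤ F ℓ * ∏ i ∈ Finset.Ioc ℓ n, (1 - p i) ^ i := by
      rw [← h2]; linarith
    exact le_of_mul_le_mul_left h5 (hc.trans_le h3)
  · rw [Finset.Ioc_eq_empty_of_le h.le, Finset.prod_empty]
    linarith

def pI (p : ℕ → ℝ) (hp : ∀ i, 0 ≤ p i ∧ p i < 1) (i : ℕ) : unitInterval :=
  ⟨p i, (hp i).1, (hp i).2.le⟩

def qE (p : ℕ → ℝ) (hp : ∀ i, 0 ≤ p i ∧ p i < 1) (n : ℕ) (e : EdgeIdx n) : unitInterval :=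
  pI p hp (e.1.2.val - e.1.1.val)

theorem Pr_eq (p : ℕ → ℝ) (hp : ∀ i, 0 ≤ p i ∧ p i < 1) (n : ℕ) (P : Sample n → Prop) :
    Pr p n P = (mu (qE p hp n)).real {ω | P ω} := by
  classical
  have h : ({ω | P ω} : Set (Sample n)) = ((Finset.univ.filter P : Finset (Sample n)) : Set (Sample n)) := by
    ext; simp
  rw [h, ← sum_measureReal_singleton]
  unfold Pr
  rw [Finset.sum_filter]
  refine Finset.sum_congr rfl fun ω _ => ?_
  rw [mu_singleton]
  rfl

variable {p : ℕ → ℝ} (hp : ∀ i, 0 ≤ p i ∧ p i < 1)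

/-- Edges crossing `c` of length more than `ℓ`. -/
def longE (n ℓ c : ℕ) : Finset (EdgeIdx n) :=
  Finset.univ.filter fun e => e.1.1.val < c ∧ c ≤ e.1.2.val ∧ ℓ < e.1.2.val - e.1.1.val

theorem long_le {η : ℝ} {ℓ : ℕ} (hℓ : ∀ n, 1 - η ≤ ∏ i ∈ Finset.Ioc ℓ n, (1 - p i) ^ i)
    (n c : ℕ) : (mu (qE p hp n)).real {ω | ¬ ∀ e ∈ longE n ℓ c, ω e = false} ≤ η := by
  classical
  have h := mu_box (qE p hp n) (longE n ℓ c) (fun _ => false)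
  have h2 : ∏ i ∈ Finset.Ioc ℓ n, (1 - p i) ^ i ≤
      ∏ e ∈ longE n ℓ c, (1 - p (e.1.2.val - e.1.1.val)) := by
    refine cross_ge hp _ _ c ?_
    intro e he
    have := (Finset.mem_filter.1 he).2
    refine ⟨this.1, this.2.1, Finset.mem_Ioc.2 ⟨this.2.2, ?_⟩⟩
    have := e.1.2.2
    omega
  have h3 := probReal_compl_eq_one_sub (μ := mu (qE p hp n))
    (s := {ω | ∀ e ∈ longE n ℓ c, ω e = false}) (Set.toFinite _).measurableSet
  have h4 : {ω : Sample n | ¬ ∀ e ∈ longE n ℓ c, ω e = false} =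
    {ω | ∀ e ∈ longE n ℓ c, ω e = false}ᶜ := rfl
  rw [h4, h3, h]
  have h5 : ∏ e ∈ longE n ℓ c, (if false = true then (qE p hp n e).1 else 1 - (qE p hp n e).1) =
      ∏ e ∈ longE n ℓ c, (1 - p (e.1.2.val - e.1.1.val)) :=
    Finset.prod_congr rfl fun e _ => by simp [qE, pI]
  rw [h5]
  linarith [hℓ n]

open scoped Classical in
/-- Constrained edges of a cell around the block `[a, a+w)`. -/
noncomputable def cellE (n ℓ w a : ℕ) : Finset (EdgeIdx n) :=
  Finset.univ.filter fun e => (a ≤ e.1.1.val + ℓ ∧ e.1.2.val < a + w + ℓ) ∧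
    ((a ≤ e.1.1.val ∧ e.1.2.val < a + w) ∨ (e.1.1.val < a ∧ a ≤ e.1.2.val) ∨
      (e.1.1.val < a + w ∧ a + w ≤ e.1.2.val))

open scoped Classical in
noncomputable def cellT (W : ℕ → ℕ → Prop) (n w a : ℕ) (e : EdgeIdx n) : Bool :=
  decide (a ≤ e.1.1.val ∧ e.1.2.val < a + w ∧ W (e.1.1.val - a) (e.1.2.val - a))

open scoped Classical in
noncomputable def dW (p : ℕ → ℝ) (W : ℕ → ℕ → Prop) (w : ℕ) : ℝ :=
  ∏ x ∈ (Finset.range w ×ˢ Finset.range w).filter (fun x => x.1 < x.2),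
    if W x.1 x.2 then p (x.2 - x.1) else 1 - p (x.2 - x.1)

theorem dW_pos {p : ℕ → ℝ} (hp : ∀ i, 0 ≤ p i ∧ p i < 1) {W : ℕ → ℕ → Prop} (hW : Adm p W) (w : ℕ) : 0 < dW p W w := by
  refine Finset.prod_pos fun x hx => ?_
  have hx := (Finset.mem_filter.1 hx).2
  split_ifs with h
  · exact hW.pos _ _ hx h
  · have := (hp (x.2 - x.1)).2
    linarith

theorem dW_le_one {p : ℕ → ℝ} (hp : ∀ i, 0 ≤ p i ∧ p i < 1) (W : ℕ → ℕ → Prop) (w : ℕ) : dW p W w ≤ 1 := by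
  refine Finset.prod_le_one (fun x _ => ?_) (fun x _ => ?_)
  · have := hp (x.2 - x.1)
    split_ifs <;> linarith
  · have := hp (x.2 - x.1)
    split_ifs <;> linarith

theorem cell_ge {c : ℝ} (hc : 0 < c)
    (hprod : ∀ n : ℕ, c ≤ ∏ i ∈ Finset.Icc 1 n, (1 - p i) ^ i) (W : ℕ → ℕ → Prop) (n ℓ w a : ℕ) :
    dW p W w * (c * c) ≤ ∏ e ∈ cellE n ℓ w a,
      if cellT W n w a e then (qE p hp n e).1 else 1 - (qE p hp n e).1 := by
  classical
  set f : EdgeIdx n → ℝ := fun e =>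
    if cellT W n w a e then (qE p hp n e).1 else 1 - (qE p hp n e).1 with hf
  have hf0 : ∀ e, 0 ≤ f e := fun e => by
    have := (qE p hp n e).2.1
    have := (qE p hp n e).2.2
    simp only [hf]
    split_ifs <;> linarith
  have hf1 : ∀ e, f e ≤ 1 := fun e => by
    have := (qE p hp n e).2.1
    have := (qE p hp n e).2.2
    simp only [hf]
    split_ifs <;> linarith
  set S := cellE n ℓ w a with hS
  set A := S.filter fun e => a ≤ e.1.1.val ∧ e.1.2.val < a + w with hA
  set B := S.filter fun e => e.1.1.val < a ∧ a ≤ e.1.2.val with hB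
  set C := S.filter fun e => e.1.1.val < a + w ∧ a + w ≤ e.1.2.val with hC
  have hSABC : S = A ∪ (B ∪ C) := by
    ext e
    simp only [hA, hB, hC, Finset.mem_union, Finset.mem_filter]
    constructor
    · intro he
      have := (Finset.mem_filter.1 he).2.2
      tauto
    · tauto
  have h1 : dW p W w ≤ ∏ e ∈ A, f e := by
    have := prod_inj_le A ((Finset.range w ×ˢ Finset.range w).filter (fun x => x.1 < x.2))
      (fun e => (e.1.1.val - a, e.1.2.val - a)) (by
        intro e he
        have h := (Finset.mem_filter.1 he).2
        have h' := e.2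
        rw [Fin.lt_def] at h'
        simp only [Finset.mem_filter, Finset.mem_product, Finset.mem_range]
        omega) (by
        intro e he e' he' h
        have h1 := (Finset.mem_filter.1 he).2
        have h2 := (Finset.mem_filter.1 he').2
        have h3 := e.2
        have h4 := e'.2
        rw [Fin.lt_def] at h3 h4
        simp only [Prod.mk.injEq] at h
        apply Subtype.ext
        apply Prod.ext
        · apply Fin.ext; omega
        · apply Fin.ext; omega)
      (fun x => if W x.1 x.2 then p (x.2 - x.1) else 1 - p (x.2 - x.1))
      (fun x _ => by
        have := hp (x.2 - x.1)
        split_ifs <;> linarith)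
      (fun x _ => by
        have := hp (x.2 - x.1)
        split_ifs <;> linarith)
    refine this.trans (le_of_eq (Finset.prod_congr rfl fun e he => ?_))
    have h := (Finset.mem_filter.1 he).2
    have h' := e.2
    rw [Fin.lt_def] at h'
    have h2 : e.1.2.val - a - (e.1.1.val - a) = e.1.2.val - e.1.1.val := by omega
    simp only [hf, cellT, qE, pI, h.1, h.2, true_and, h2, decide_eq_true_eq]
  have hcross : ∀ (D : Finset (EdgeIdx n)) (b : ℕ),
      (∀ e ∈ D, e.1.1.val < b ∧ b ≤ e.1.2.val ∧ cellT W n w a e = false) → c ≤ ∏ e ∈ D, f e := by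
    intro D b hD
    have := cross_ge hp D (Finset.Icc 1 n) b (by
      intro e he
      have := hD e he
      refine ⟨this.1, this.2.1, Finset.mem_Icc.2 ?_⟩
      have := e.1.2.2
      omega)
    refine (hprod n).trans (this.trans (le_of_eq (Finset.prod_congr rfl fun e he => ?_)))
    simp [hf, (hD e he).2.2, qE, pI]
  have h2 : c ≤ ∏ e ∈ B, f e := by
    refine hcross B a fun e he => ?_
    have h := (Finset.mem_filter.1 he).2
    refine ⟨h.1, h.2, ?_⟩
    simp only [cellT, decide_eq_false_iff_not]
    omega
  have h3 : c ≤ ∏ e ∈ C, f e := by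
    refine hcross C (a + w) fun e he => ?_
    have h := (Finset.mem_filter.1 he).2
    refine ⟨h.1, h.2, ?_⟩
    simp only [cellT, decide_eq_false_iff_not]
    omega
  rw [hSABC]
  have h4 := prod_union_ge B C f hf0 hf1
  have h5 := prod_union_ge A (B ∪ C) f hf0 hf1
  have h6 : c * c ≤ (∏ e ∈ B, f e) * ∏ e ∈ C, f e := mul_le_mul h2 h3 hc.le (hc.le.trans h2)
  refine le_trans ?_ h5
  exact mul_le_mul h1 (h6.trans h4) (by positivity) (Finset.prod_nonneg fun e _ => hf0 e)

theorem marker_of {n : ℕ} (ω : Sample n) {W : ℕ → ℕ → Prop} (hW : Adm p W) {ℓ w a : ℕ}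
    (hn : a + w ≤ n)
    (h1 : ∀ e ∈ cellE n ℓ w a, ω e = cellT W n w a e)
    (h2 : ∀ e ∈ longE n ℓ a, ω e = false)
    (h3 : ∀ e ∈ longE n ℓ (a + w), ω e = false) : Marker (adjVal ω) W w a := by
  have hlt : ∀ i j, i < j → j < w → (adjVal ω (a + i) (a + j) ↔ W i j) := by
    intro i j hij hj
    rw [adjVal_lt ω (by omega : a + i < a + j)]
    have hy : a + j < n := by omega
    have := h1 ⟨(⟨a + i, by omega⟩, ⟨a + j, hy⟩), by rw [Fin.lt_def]; simp; omega⟩ (by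
      rw [cellE, Finset.mem_filter]
      refine ⟨Finset.mem_univ _, ?_⟩
      dsimp only
      omega)
    constructor
    · rintro ⟨_, h⟩
      rw [h] at this
      have := this.symm
      simp only [cellT, decide_eq_true_eq] at this
      simpa using this.2.2
    · intro h
      refine ⟨hy, ?_⟩
      rw [this]
      simp only [cellT, decide_eq_true_eq]
      refine ⟨by omega, by omega, ?_⟩
      simpa using h
  have hcut : ∀ b, (b = a ∨ b = a + w) → (∀ e ∈ longE n ℓ b, ω e = false) → Cut (adjVal ω) b := by
    intro b hb hl x y hx hy hR
    rw [adjVal_lt ω (by omega : x < y)] at hR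
    obtain ⟨hyn, hR⟩ := hR
    rcases lt_or_ge ℓ (y - x) with hlong | hshort
    · rw [hl _ (by
        rw [longE, Finset.mem_filter]
        exact ⟨Finset.mem_univ _, hx, hy, hlong⟩)] at hR
      exact absurd hR (by simp)
    · have := h1 _ (by
        rw [cellE, Finset.mem_filter]
        refine ⟨Finset.mem_univ ⟨(⟨x, by omega⟩, ⟨y, hyn⟩), by rw [Fin.lt_def]; simp; omega⟩, ?_⟩
        dsimp only
        omega)
      rw [hR] at this
      have := this.symm
      simp only [cellT, decide_eq_true_eq] at this
      omega
  refine ⟨hcut a (Or.inl rfl) h2, hcut (a + w) (Or.inr rfl) h3, ?_⟩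
  intro i j hi hj
  rcases lt_trichotomy i j with h | rfl | h
  · exact hlt i j h hj
  · exact iff_of_false (adjVal_irr ω _) (hW.irr _)
  · have := hlt j i h hi
    exact ⟨fun h => hW.symm _ _ (this.1 (adjVal_symm ω h)),
      fun h => adjVal_symm ω (this.2 (hW.symm _ _ h))⟩

theorem marker_whp {c : ℝ} (hc : 0 < c)
    (hprod : ∀ n : ℕ, c ≤ ∏ i ∈ Finset.Icc 1 n, (1 - p i) ^ i) {W : ℕ → ℕ → Prop}
    (hW : Adm p W) (w : ℕ) {ε : ℝ} (hε : 0 < ε) :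
    ∃ T : ℕ, ∀ n s, s + T ≤ n → (mu (qE p hp n)).real
      {ω | ¬ ∃ a, s ≤ a ∧ a + w ≤ s + T ∧ Marker (adjVal ω) W w a} ≤ ε := by
  classical
  set δ := dW p W w * (c * c) with hδ
  have hc1 : c ≤ 1 := by simpa using hprod 0
  have hd1 := dW_le_one hp W w
  have hd0 := dW_pos hp hW w
  have hδ0 : 0 < δ := by positivity
  have hδ1 : δ ≤ 1 := by
    have : c * c ≤ 1 := by nlinarith
    rw [hδ]
    exact mul_le_one₀ hd1 (by positivity) this
  obtain ⟨J, hJ⟩ := exists_pow_lt_of_lt_one (half_pos hε) (by linarith : 1 - δ < 1)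
  set η : ℝ := ε / (4 * (J + 1)) with hη
  have hη0 : 0 < η := by positivity
  obtain ⟨ℓ, hℓ⟩ := tail_ge hp hc hprod hη0
  set D := 2 * ℓ + w with hD
  refine ⟨J * D, fun n s hsn => ?_⟩
  set a : ℕ → ℕ := fun j => s + j * D + ℓ with ha
  set μ := mu (qE p hp n) with hμ
  have hjD : ∀ i j, i < j → i * D + D ≤ j * D := by
    intro i j hij
    have := Nat.mul_le_mul_right D hij
    rwa [Nat.succ_mul] at this
  have hsub : {ω : Sample n | ¬ ∃ a, s ≤ a ∧ a + w ≤ s + J * D ∧ Marker (adjVal ω) W w a} ⊆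
      {ω | ∀ j < J, ¬ ∀ e ∈ cellE n ℓ w (a j), ω e = cellT W n w (a j) e} ∪
      ⋃ j ∈ Finset.range J, ({ω | ¬ ∀ e ∈ longE n ℓ (a j), ω e = false} ∪
        {ω | ¬ ∀ e ∈ longE n ℓ (a j + w), ω e = false}) := by
    intro ω hω
    by_contra hcon
    simp only [Set.mem_union, Set.mem_ofPred_eq, Set.mem_iUnion, Finset.mem_range, not_or,
      not_exists, not_not] at hcon
    obtain ⟨h1, h2⟩ := hcon
    push Not at h1
    obtain ⟨j, hj, h1⟩ := h1
    have hb := hjD j J hj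
    apply hω
    refine ⟨a j, ?_, ?_, marker_of ω hW ?_ h1 (h2 j hj).1 (h2 j hj).2⟩
    · simp only [ha]; omega
    · simp only [ha]; omega
    · simp only [ha]; omega
  refine (measureReal_mono hsub (measure_ne_top _ _)).trans ?_
  refine (measureReal_union_le _ _).trans ?_
  have hA : μ.real {ω | ∀ j < J, ¬ ∀ e ∈ cellE n ℓ w (a j), ω e = cellT W n w (a j) e} ≤
      (1 - δ) ^ J := by
    refine mu_no_box (qE p hp n) (fun j => cellE n ℓ w (a j)) (fun j => cellT W n w (a j)) J ?_ δ
      (fun j _ => cell_ge hp hc hprod W n ℓ w (a j)) hδ1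
    intro i j hij hj
    rw [Finset.disjoint_left]
    intro e he he'
    have h1 := (Finset.mem_filter.1 he).2.1
    have h2 := (Finset.mem_filter.1 he').2.1
    have h3 := e.2
    rw [Fin.lt_def] at h3
    have := hjD i j hij
    simp only [ha] at h1 h2
    omega
  have hB : μ.real (⋃ j ∈ Finset.range J, ({ω | ¬ ∀ e ∈ longE n ℓ (a j), ω e = false} ∪
        {ω | ¬ ∀ e ∈ longE n ℓ (a j + w), ω e = false})) ≤ J * (η + η) := by
    refine (measureReal_biUnion_finset_le _ _).trans ?_
    refine (Finset.sum_le_card_nsmul _ _ (η + η) fun j _ => ?_).trans (by rw [Finset.card_range, nsmul_eq_mul])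
    refine (measureReal_union_le _ _).trans ?_
    exact add_le_add (long_le hp hℓ n _) (long_le hp hℓ n _)
  have hC : (J : ℝ) * (η + η) ≤ ε / 2 := by
    have : ε = 4 * (J + 1) * η := by rw [hη]; field_simp
    rw [this]
    nlinarith
  linarith

end Estimates


/-! ### The final argument -/

section Final

open MeasureTheory

def shiftE {T n : ℕ} (s : ℕ) (h : s + T ≤ n) (e : EdgeIdx T) : EdgeIdx n :=
  ⟨(⟨s + e.1.1.val, by have := e.1.1.2; omega⟩, ⟨s + e.1.2.val, by have := e.1.2.2; omega⟩), by
    have := e.2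
    rw [Fin.lt_def] at this ⊢
    simpa using this⟩

theorem shiftE_inj {T n s : ℕ} (h : s + T ≤ n) {e e' : EdgeIdx T}
    (he : shiftE s h e = shiftE s h e') : e = e' := by
  simp only [shiftE, Subtype.mk.injEq, Prod.mk.injEq, Fin.mk.injEq] at he
  apply Subtype.ext
  apply Prod.ext
  · apply Fin.ext; omega
  · apply Fin.ext; omega

theorem adjVal_shift {T n s : ℕ} (h : s + T ≤ n) (ω : Sample n) {i j : ℕ} (hi : i < T) (hj : j < T) :
    adjVal ω (s + i) (s + j) ↔ adjVal (fun e => ω (shiftE s h e)) i j := by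
  have key : ∀ i j, i < j → j < T →
      (adjVal ω (s + i) (s + j) ↔ adjVal (fun e => ω (shiftE s h e)) i j) := by
    intro i j hij hj
    rw [adjVal_lt ω (by omega : s + i < s + j), adjVal_lt _ hij]
    constructor
    · rintro ⟨_, h⟩
      exact ⟨hj, h⟩
    · rintro ⟨_, h⟩
      exact ⟨by omega, h⟩
  rcases lt_trichotomy i j with hij | rfl | hij
  · exact key i j hij hj
  · exact iff_of_false (adjVal_irr _ _) (adjVal_irr _ _)
  · have := key j i hij hi
    exact ⟨fun h => adjVal_symm _ (this.1 (adjVal_symm _ h)),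
      fun h => adjVal_symm _ (this.2 (adjVal_symm _ h))⟩

theorem ty_window (k : ℕ) {T n s t : ℕ} (h : s + T ≤ n) (ω : Sample n) (ht : t = s + T) :
    ty k (Iv (adjVal ω) s t) = ty k (Iv (adjVal (fun e => ω (shiftE s h e))) 0 T) := by
  have := ty_shift k (adjVal ω) (adjVal (fun e => ω (shiftE s h e))) s 0 T (by
    intro i j hi hj
    rw [zero_add, zero_add]
    exact adjVal_shift h ω hi hj)
  rw [zero_add] at this
  rw [ht, this]

theorem qE_shiftE {p : ℕ → ℝ} (hp : ∀ i, 0 ≤ p i ∧ p i < 1) {T n s : ℕ} (h : s + T ≤ n)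
    (e : EdgeIdx T) : qE p hp n (shiftE s h e) = qE p hp T e := by
  simp only [qE, shiftE, Nat.add_sub_add_left]

def endsE {T n : ℕ} (h : T + T ≤ n) : EdgeIdx T ⊕ EdgeIdx T → EdgeIdx n :=
  Sum.elim (shiftE 0 (by omega)) (shiftE (n - T) (by omega))

theorem endsE_inj {T n : ℕ} (h : T + T ≤ n) : Function.Injective (endsE h) := by
  have hne : ∀ e e' : EdgeIdx T, shiftE (n := n) 0 (by omega) e ≠ shiftE (n - T) (by omega) e' := by
    intro e e' he
    simp only [shiftE, Subtype.mk.injEq, Prod.mk.injEq, Fin.mk.injEq] at he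
    have := e.1.1.2
    omega
  rintro (e | e) (e' | e') he
  · exact congrArg _ (shiftE_inj (by omega : 0 + T ≤ n) he)
  · exact absurd he (hne _ _)
  · exact absurd he.symm (hne _ _)
  · exact congrArg _ (shiftE_inj (by omega : n - T + T ≤ n) he)

theorem real_abs_le {Ω : Type*} [MeasurableSpace Ω] (μ : Measure Ω) [IsProbabilityMeasure μ]
    (A B C : Set Ω) (h : ∀ ω, ω ∉ C → (ω ∈ A ↔ ω ∈ B)) : |μ.real A - μ.real B| ≤ μ.real C := by
  have h1 : μ.real A ≤ μ.real B + μ.real C := by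
    refine (measureReal_mono (?_ : A ⊆ B ∪ C) (measure_ne_top _ _)).trans (measureReal_union_le _ _)
    intro ω hω
    by_cases hc : ω ∈ C
    · exact Or.inr hc
    · exact Or.inl ((h ω hc).1 hω)
  have h2 : μ.real B ≤ μ.real A + μ.real C := by
    refine (measureReal_mono (?_ : B ⊆ A ∪ C) (measure_ne_top _ _)).trans (measureReal_union_le _ _)
    intro ω hω
    by_cases hc : ω ∈ C
    · exact Or.inr hc
    · exact Or.inl ((h ω hc).2 hω)
  rw [abs_le]
  constructor <;> linarith

theorem approx {p : ℕ → ℝ} (hp : ∀ i, 0 ≤ p i ∧ p i < 1) {c : ℝ} (hc : 0 < c)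
    (hprod : ∀ n : ℕ, c ≤ ∏ i ∈ Finset.Icc 1 n, (1 - p i) ^ i) (ψ : Lle.Sentence)
    {ε : ℝ} (hε : 0 < ε) : ∃ (q : ℝ) (N : ℕ), ∀ n ≥ N, |ProbLe p n ψ - q| ≤ ε := by
  obtain ⟨k, χ, hχ⟩ := sat_ty ψ
  obtain ⟨e, he, habs⟩ := exists_absorbing (admT p k) (ty_aper k)
  obtain ⟨W, w, hW, rfl⟩ := he
  obtain ⟨T, hT⟩ := marker_whp hp hc hprod hW w (half_pos hε)
  let P : (EdgeIdx T ⊕ EdgeIdx T → Bool) → Prop := fun ω =>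
    χ (ty k (Iv (adjVal (fun e => ω (Sum.inl e))) 0 T) *
      ty k (Iv (adjVal (fun e => ω (Sum.inr e))) 0 T))
  refine ⟨(mu (Sum.elim (qE p hp T) (qE p hp T))).real {ω | P ω}, T + T, fun n hn => ?_⟩
  have hq : (fun e => qE p hp n (endsE hn e)) = Sum.elim (qE p hp T) (qE p hp T) := by
    funext e
    rcases e with e | e
    · exact qE_shiftE hp (by omega : 0 + T ≤ n) e
    · exact qE_shiftE hp (by omega : n - T + T ≤ n) e
  have hmap := mu_map_real (qE p hp n) (endsE hn) (endsE_inj hn) P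
  rw [hq] at hmap
  rw [← hmap]
  unfold ProbLe
  rw [Pr_eq p hp]
  have hn' : n - T + T = n := by omega
  have hb1 := hT n 0 (by omega)
  have hb2 := hT n (n - T) (by omega)
  have hb3 := mu_null (qE p hp n)
  refine (real_abs_le _ _ _
    (({ω | ¬ ∃ a, 0 ≤ a ∧ a + w ≤ 0 + T ∧ Marker (adjVal ω) W w a} ∪
      {ω | ¬ ∃ a, n - T ≤ a ∧ a + w ≤ n - T + T ∧ Marker (adjVal ω) W w a}) ∪
      {ω | ¬ ∀ e, ω e = true → 0 < (qE p hp n e).1}) ?_).trans ?_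
  · intro ω hω
    simp only [Set.mem_union, Set.mem_ofPred_eq, not_or, not_not] at hω
    obtain ⟨⟨⟨a, _, ha, hma⟩, ⟨b, hb, hb', hmb⟩⟩, hpos⟩ := hω
    have hadm : Adm p (adjVal ω) := adm_adjVal ω hpos
    change SatLe ω ψ ↔ _
    rw [sat_Iv ψ ω k χ hχ,
      ty_determined hadm habs hma hmb (by omega : a + w ≤ T) (by omega : T ≤ n - T) hb (by omega)]
    have e1 := ty_window (t := T) k (by omega : 0 + T ≤ n) ω (by omega)
    have e2 := ty_window (t := n) k (by omega : n - T + T ≤ n) ω (by omega)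
    rw [e1, e2]
    rfl
  · refine (measureReal_union_le _ _).trans ?_
    have := measureReal_union_le (μ := mu (qE p hp n))
      {ω : Sample n | ¬ ∃ a, 0 ≤ a ∧ a + w ≤ 0 + T ∧ Marker (adjVal ω) W w a}
      {ω | ¬ ∃ a, n - T ≤ a ∧ a + w ≤ n - T + T ∧ Marker (adjVal ω) W w a}
    linarith

end Final

/-- If `0 ≤ p i < 1` and `∏_{i=1}^∞ (1 - p i)^i > 0` (i.e. the partial
products are bounded below by a positive constant), then for every sentence `ψ` of `L≤`,
`Prob(n, p̄; ψ)` converges. -/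
theorem statement_11 (p : ℕ → ℝ) (hp : ∀ i, 0 ≤ p i ∧ p i < 1)
    (hprod : ∃ c : ℝ, 0 < c ∧ ∀ n : ℕ, c ≤ ∏ i ∈ Finset.Icc 1 n, (1 - p i) ^ i)
    (ψ : Lle.Sentence) :
    ∃ ℓ : ℝ, Tendsto (fun n => ProbLe p n ψ) atTop (nhds ℓ) := by
  obtain ⟨c, hc, hprod⟩ := hprod
  apply cauchySeq_tendsto_of_complete
  rw [Metric.cauchySeq_iff']
  intro ε hε
  obtain ⟨q, N, h⟩ := approx hp hc hprod ψ (by positivity : 0 < ε / 3)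
  refine ⟨N, fun n hn => ?_⟩
  have h1 := abs_le.1 (h n hn)
  have h2 := abs_le.1 (h N le_rfl)
  rw [Real.dist_eq, abs_lt]
  constructor <;> linarith [h1.1, h1.2, h2.1, h2.2]

end RandomGraph
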